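/- arXiv:2408.12962 — 2 statements merged into one kernel-verified Lean document; each statement's English description precedes it below -/
import Mathlib

section
/- Let P, Q, R be probability mass functions on a finite set S such that P is absolutely continuous with respect to Q and Q is absolutely continuous with respect to R, and let M = max_{s : Q(s)>0} |log(Q(s)/R(s))|. Then | D(P‖R) − D(Q‖R) | ≤ D(P‖Q) + M·√(2·D(P‖Q)). (The proof combines the decomposition D(P‖R) = D(P‖Q) + D(Q‖R) + Σ_s (P(s)−Q(s))·log(Q(s)/R(s)) with Pinsker's inequality bounding the total variation distance between P and Q by √(D(P‖Q)/2).) -/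
/-!
The difference `D(P‖R) - D(Q‖R)` equals `D(P‖Q) + ∑ (P - Q) log (Q / R)`, and the last sum is at
most `M ∑ |P - Q|` in absolute value, so everything rests on Pinsker's inequality
`(∑ |P - Q|)² ≤ 2 D(P‖Q)`. With `φ x = x log x + 1 - x`, the divergence is `∑ Q φ(P / Q)`, and
`(x - 1)² ≤ (2x + 4) / 3 * φ x` bounds each `(P - Q)²` by `(2P + 4Q) / 3 * Q φ(P / Q)`. The factors
`(2P + 4Q) / 3` sum to `2`, so Cauchy–Schwarz gives Pinsker's inequality. The inequality for `φ`
holds because `(2x + 4) φ x - 3 (x - 1)²` has second derivative `4 (log x - (1 - 1 / x)) ≥ 0` and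
vanishes together with its first derivative at `x = 1`.
-/

open scoped BigOperators Classical

namespace CovertPinsker

/-- Kullback–Leibler divergence (natural logarithm) between two functions on a
finite type, with the convention `0 · log 0 = 0`. -/
noncomputable def klDiv {α : Type*} [Fintype α] (p q : α → ℝ) : ℝ :=
  ∑ a, p a * Real.log (p a / q a)

open Finset
open InformationTheory (klFun klFun_apply klFun_nonneg hasDerivAt_klFun)

lemma sq_sub_one_le_mul_klFun {x : ℝ} (hx : 0 ≤ x) :
    (x - 1) ^ 2 ≤ (2 * x + 4) / 3 * klFun x := by
  let gap (y : ℝ) : ℝ := (2 * y + 4) * klFun y - 3 * (y - 1) ^ 2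
  let gap' (y : ℝ) : ℝ := 2 * klFun y + (2 * y + 4) * Real.log y - 6 * (y - 1)
  have hasDerivAt_affine (y : ℝ) : HasDerivAt (fun z : ℝ ↦ 2 * z + 4) 2 y := by
    simpa using ((hasDerivAt_id y).const_mul 2).add_const 4
  have hasDerivAt_gap {y : ℝ} (hy : 0 < y) : HasDerivAt gap (gap' y) y := by
    refine (((hasDerivAt_affine y).mul (hasDerivAt_klFun hy.ne')).sub
      ((((hasDerivAt_id y).sub_const 1).pow 2).const_mul 3)).congr_deriv ?_
    simp only [gap', id_eq]
    ring
  have hasDerivAt_gap' {y : ℝ} (hy : 0 < y) :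
      HasDerivAt gap' (4 * (Real.log y - (1 - y⁻¹))) y := by
    refine ((((hasDerivAt_klFun hy.ne').const_mul 2).add
      ((hasDerivAt_affine y).mul (Real.hasDerivAt_log hy.ne'))).sub
      (((hasDerivAt_id y).sub_const 1).const_mul 6)).congr_deriv ?_
    field_simp
    ring
  have convexOn_gap : ConvexOn ℝ (Set.Ici 0) gap := by
    refine convexOn_of_hasDerivWithinAt2_nonneg (f' := gap')
      (f'' := fun y ↦ 4 * (Real.log y - (1 - y⁻¹))) (convex_Ici 0) (by fun_prop) ?_ ?_ ?_
    all_goals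
      intro y hy
      rw [interior_Ici, Set.mem_Ioi] at hy
    · exact (hasDerivAt_gap hy).hasDerivWithinAt
    · exact (hasDerivAt_gap' hy).hasDerivWithinAt
    · exact mul_nonneg (by norm_num) (sub_nonneg.2 (Real.one_sub_inv_le_log_of_pos hy))
  have isMinOn_gap : IsMinOn gap (Set.Ici 0) 1 := by
    refine convexOn_gap.isMinOn_of_rightDeriv_eq_zero (by simp) ?_
    rw [(hasDerivAt_gap one_pos).hasDerivWithinAt.derivWithin (uniqueDiffWithinAt_Ioi 1)]
    simp [gap', klFun_apply]
  have gap_nonneg : 0 ≤ gap x := by simpa [gap, klFun_apply] using isMinOn_gap hx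
  linarith

lemma mul_klFun_div {p q : ℝ} (hpq : q = 0 → p = 0) :
    q * klFun (p / q) = p * Real.log (p / q) + q - p := by
  rcases eq_or_ne q 0 with rfl | hq
  · simp [hpq rfl]
  · rw [klFun_apply]
    field_simp

lemma sq_sub_le_mul_klFun_div {p q : ℝ} (hp : 0 ≤ p) (hq : 0 ≤ q) (hpq : q = 0 → p = 0) :
    (p - q) ^ 2 ≤ (2 * p + 4 * q) / 3 * (q * klFun (p / q)) := by
  rcases hq.eq_or_lt' with rfl | hq
  · simp [hpq rfl]
  calc (p - q) ^ 2 = q ^ 2 * (p / q - 1) ^ 2 := by field_simp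
    _ ≤ q ^ 2 * ((2 * (p / q) + 4) / 3 * klFun (p / q)) := by
      gcongr
      exact sq_sub_one_le_mul_klFun (by positivity)
    _ = (2 * p + 4 * q) / 3 * (q * klFun (p / q)) := by field_simp

lemma abs_sum_mul_le_mul_sum_abs {ι : Type*} (s : Finset ι) {f g : ι → ℝ} {M : ℝ}
    (hg : ∀ i ∈ s, f i ≠ 0 → |g i| ≤ M) : |∑ i ∈ s, f i * g i| ≤ M * ∑ i ∈ s, |f i| := by
  rw [mul_sum]
  refine (abs_sum_le_sum_abs _ _).trans (sum_le_sum fun i hi ↦ ?_)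
  rcases eq_or_ne (f i) 0 with hf | hf
  · simp [hf]
  · rw [abs_mul, mul_comm]
    exact mul_le_mul_of_nonneg_right (hg i hi hf) (abs_nonneg _)

section KLDiv

variable {α : Type*} [Fintype α] {P Q R : α → ℝ}

lemma sum_mul_klFun_div (hPQ : ∀ a, Q a = 0 → P a = 0) :
    ∑ a, Q a * klFun (P a / Q a) = klDiv P Q + ∑ a, Q a - ∑ a, P a := by
  simp only [mul_klFun_div (hPQ _), sum_sub_distrib, sum_add_distrib, klDiv]

lemma klDiv_nonneg (hP : ∀ a, 0 ≤ P a) (hQ : ∀ a, 0 ≤ Q a) (hPQ : ∀ a, Q a = 0 → P a = 0)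
    (hsum : ∑ a, Q a ≤ ∑ a, P a) : 0 ≤ klDiv P Q := by
  have h : 0 ≤ ∑ a, Q a * klFun (P a / Q a) :=
    sum_nonneg fun a _ ↦ mul_nonneg (hQ a) (klFun_nonneg (div_nonneg (hP a) (hQ a)))
  rw [sum_mul_klFun_div hPQ] at h
  linarith

lemma sq_sum_abs_sub_le_mul_klDiv (hP : ∀ a, 0 ≤ P a) (hQ : ∀ a, 0 ≤ Q a)
    (hPQ : ∀ a, Q a = 0 → P a = 0) :
    (∑ a, |P a - Q a|) ^ 2 ≤
      (2 * ∑ a, P a + 4 * ∑ a, Q a) / 3 * (klDiv P Q + ∑ a, Q a - ∑ a, P a) := by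
  have cauchy_schwarz : (∑ a, |P a - Q a|) ^ 2 ≤
      (∑ a, (2 * P a + 4 * Q a) / 3) * ∑ a, Q a * klFun (P a / Q a) := by
    refine sum_sq_le_sum_mul_sum_of_sq_le_mul univ (fun a _ ↦ ?_) (fun a _ ↦ ?_) fun a _ ↦ ?_
    · linarith [hP a, hQ a]
    · exact mul_nonneg (hQ a) (klFun_nonneg (div_nonneg (hP a) (hQ a)))
    · rw [sq_abs]
      exact sq_sub_le_mul_klFun_div (hP a) (hQ a) (hPQ a)
  rwa [sum_mul_klFun_div hPQ, ← sum_div, sum_add_distrib, ← mul_sum, ← mul_sum] at cauchy_schwarz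

lemma sum_abs_sub_le_sqrt_klDiv (hP : ∀ a, 0 ≤ P a) (hQ : ∀ a, 0 ≤ Q a)
    (hPQ : ∀ a, Q a = 0 → P a = 0) (hsum : ∑ a, P a = ∑ a, Q a) :
    ∑ a, |P a - Q a| ≤ √(2 * (∑ a, Q a) * klDiv P Q) := by
  refine Real.le_sqrt_of_sq_le ((sq_sum_abs_sub_le_mul_klDiv hP hQ hPQ).trans_eq ?_)
  rw [hsum]
  ring

lemma klDiv_sub_klDiv (hPQ : ∀ a, Q a = 0 → P a = 0) (hQR : ∀ a, R a = 0 → Q a = 0) :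
    klDiv P R - klDiv Q R = klDiv P Q + ∑ a, (P a - Q a) * Real.log (Q a / R a) := by
  simp only [klDiv]
  rw [← sum_sub_distrib, ← sum_add_distrib]
  refine sum_congr rfl fun a _ ↦ ?_
  by_cases hp : P a = 0
  · simp [hp]
  have hq : Q a ≠ 0 := mt (hPQ a) hp
  have hr : R a ≠ 0 := mt (hQR a) hq
  rw [Real.log_div hp hr, Real.log_div hq hr, Real.log_div hp hq]
  ring

theorem abs_klDiv_sub_klDiv_le_general (hP : ∀ a, 0 ≤ P a) (hQ : ∀ a, 0 ≤ Q a)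
    (hsum : ∑ a, P a = ∑ a, Q a) (hPQ : ∀ a, Q a = 0 → P a = 0) (hQR : ∀ a, 0 < Q a → 0 < R a)
    {M : ℝ} (hM : 0 ≤ M) (hlog : ∀ a, 0 < Q a → |Real.log (Q a / R a)| ≤ M) :
    |klDiv P R - klDiv Q R| ≤ klDiv P Q + M * √(2 * (∑ a, Q a) * klDiv P Q) := by
  have hQR₀ (a : α) (hr : R a = 0) : Q a = 0 :=
    ((hQ a).eq_or_lt').resolve_right fun hq ↦ (hQR a hq).ne' hr
  have hlog_of_ne (a : α) (h : P a - Q a ≠ 0) : |Real.log (Q a / R a)| ≤ M :=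
    hlog a ((hQ a).lt_of_ne' fun hq ↦ h (by simp [hq, hPQ a hq]))
  calc |klDiv P R - klDiv Q R|
      = |klDiv P Q + ∑ a, (P a - Q a) * Real.log (Q a / R a)| := by
        rw [klDiv_sub_klDiv hPQ hQR₀]
    _ ≤ |klDiv P Q| + |∑ a, (P a - Q a) * Real.log (Q a / R a)| := abs_add_le _ _
    _ ≤ klDiv P Q + M * ∑ a, |P a - Q a| :=
        add_le_add (abs_of_nonneg (klDiv_nonneg hP hQ hPQ hsum.ge)).le
          (abs_sum_mul_le_mul_sum_abs univ fun a _ ↦ hlog_of_ne a)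
    _ ≤ klDiv P Q + M * √(2 * (∑ a, Q a) * klDiv P Q) := by
        gcongr
        exact sum_abs_sub_le_sqrt_klDiv hP hQ hPQ hsum

end KLDiv

/-- If `P ≪ Q ≪ R` are pmfs on a finite set and `M` is the maximum of
`|log(Q(s)/R(s))|` over the support of `Q`, then
`|D(P‖R) − D(Q‖R)| ≤ D(P‖Q) + M √(2 D(P‖Q))`. -/
theorem abs_klDiv_sub_klDiv_le (S : Type) [Fintype S]
    (P Q R : S → ℝ)
    (hPnn : ∀ s, 0 ≤ P s) (hP : ∑ s, P s = 1)
    (hQnn : ∀ s, 0 ≤ Q s) (hQ : ∑ s, Q s = 1)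
    (hRnn : ∀ s, 0 ≤ R s) (hR : ∑ s, R s = 1)
    (hPQ : ∀ s, Q s = 0 → P s = 0)
    (hQR : ∀ s, R s = 0 → Q s = 0)
    (M : ℝ)
    (hMub : ∀ s, 0 < Q s → |Real.log (Q s / R s)| ≤ M)
    (hMmem : ∃ s, 0 < Q s ∧ M = |Real.log (Q s / R s)|) :
    |klDiv P R - klDiv Q R| ≤ klDiv P Q + M * Real.sqrt (2 * klDiv P Q) := by
  have hM : 0 ≤ M := by
    obtain ⟨s, -, rfl⟩ := hMmem
    exact abs_nonneg _
  simpa [hQ] using abs_klDiv_sub_klDiv_le_general hPnn hQnn (hP.trans hQ.symm) hPQ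
    (fun s hs ↦ (hRnn s).lt_of_ne' (mt (hQR s) hs.ne')) hM hMub

end CovertPinsker
end

section
/- Let 𝒯 = {1,...,6}, let f : 𝒳3 → ℝ be any function, let λ ∈ [0,1], let P_{TX3} and Q_{TX3} be pmfs on 𝒯×𝒳3, and let (ρ_{1,t},ρ_{2,t})_{t∈𝒯} and (ρ'_{1,t},ρ'_{2,t})_{t∈𝒯} be nonnegative tuples such that D_P := E_{P_{TX3}}[F(ρ_{1,T},ρ_{2,T},X3)] > 0 and D_Q := E_{Q_{TX3}}[F(ρ'_{1,T},ρ'_{2,T},X3)] > 0, where F(ρ1,ρ2,x3) = Σ_{z∈𝒵} (ρ1·Γ_{Z|X1X2X3}(z|1,0,x3) + ρ2·Γ_{Z|X1X2X3}(z|0,1,x3) − (ρ1+ρ2)·Γ_{Z|X1X2X3}(z|0,0,x3))²/Γ_{Z|X1X2X3}(z|0,0,x3). Set ν = √(D_P/D_Q), define the pmf R on {1,...,12}×𝒳3 by R(t,x3) = λ·P_{TX3}(t,x3) for t ∈ {1,...,6} and R(t,x3) = (1−λ)·Q_{TX3}(t−6,x3) for t ∈ {7,...,12}, and define σ_{ℓ,t}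 = ρ_{ℓ,t} for t ∈ {1,...,6} and σ_{ℓ,t} = ν·ρ'_{ℓ,t−6} for t ∈ {7,...,12} (ℓ = 1,2). Then E_R[F(σ_{1,T},σ_{2,T},X3)] = D_P, and for each ℓ ∈ {1,2}: λ·E_{P_{TX3}}[ρ_{ℓ,T}·f(X3)]/√(D_P) + (1−λ)·E_{Q_{TX3}}[ρ'_{ℓ,T}·f(X3)]/√(D_Q) = E_R[σ_{ℓ,T}·f(X3)]/√(E_R[F(σ_{1,T},σ_{2,T},X3)]). -/
open scoped BigOperators Classical

namespace CovertMixing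

variable {X3 Z : Type*} [Fintype X3] [Fintype Z]

/-- The unnormalized weighted chi-squared term
`F(ρ1, ρ2, x3) = Σ_z (ρ1 Γ(z|1,0,x3) + ρ2 Γ(z|0,1,x3) − (ρ1+ρ2) Γ(z|0,0,x3))² / Γ(z|0,0,x3)`
(terms with vanishing denominator contribute `0`). -/
noncomputable def F (Γ : Bool → Bool → X3 → Z → ℝ) (x3 : X3) (ρ1 ρ2 : ℝ) : ℝ :=
  ∑ z, (ρ1 * Γ true false x3 z + ρ2 * Γ false true x3 z
      - (ρ1 + ρ2) * Γ false false x3 z) ^ 2 / Γ false false x3 z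

/-!
`F` is homogeneous of degree `2` in `(ρ1, ρ2)`, so rescaling the second family by `ν = √(D_P / D_Q)`
turns its denominator `D_Q` into `ν² D_Q = D_P`. Both halves of the mixture then have denominator
`D_P`, and hence so does the mixture. The numerators are homogeneous of degree `1`, and
`ν / √D_P = 1 / √D_Q` restores the original normalization of the second half.
-/

theorem F_mul_mul {X : Type*} (Γ : Bool → Bool → X → Z → ℝ) (x3 : X) (c ρ1 ρ2 : ℝ) :
    F Γ x3 (c * ρ1) (c * ρ2) = c ^ 2 * F Γ x3 ρ1 ρ2 := by
  simp only [F, Finset.mul_sum]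
  exact Finset.sum_congr rfl fun z _ => by ring

section Mixture

variable {S T : Type*} [Fintype S] [Fintype T]

/-- The expectation `E_μ[g(T, X3)]` of the paper, defined for every real weight `μ` so that it is
linear in `μ` as well as in `g`. -/
def expectation (μ g : T → X3 → ℝ) : ℝ :=
  ∑ t, ∑ x, μ t x * g t x

theorem expectation_const_mul (c : ℝ) (μ g : T → X3 → ℝ) :
    expectation μ (fun t x => c * g t x) = c * expectation μ g := by
  simp only [expectation, Finset.mul_sum, mul_left_comm]

theorem expectation_const_mul_left (c : ℝ) (μ g : T → X3 → ℝ) :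
    expectation (fun t x => c * μ t x) g = c * expectation μ g := by
  simp only [expectation, Finset.mul_sum, mul_assoc]

theorem expectation_sumElim (P : S → X3 → ℝ) (Q : T → X3 → ℝ) (g : S ⊕ T → X3 → ℝ) :
    expectation (Sum.elim P Q) g =
      expectation P (fun s => g (Sum.inl s)) + expectation Q (fun t => g (Sum.inr t)) :=
  Fintype.sum_sum_type _

theorem expectation_mixture {P : S → X3 → ℝ} {Q : T → X3 → ℝ} {R : S ⊕ T → X3 → ℝ} {a b : ℝ}
    (hRl : ∀ s x, R (Sum.inl s) x = a * P s x) (hRr : ∀ t x, R (Sum.inr t) x = b * Q t x)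
    (g : S ⊕ T → X3 → ℝ) :
    expectation R g =
      a * expectation P (fun s => g (Sum.inl s)) + b * expectation Q (fun t => g (Sum.inr t)) := by
  obtain rfl : R = Sum.elim (fun s x => a * P s x) (fun t x => b * Q t x) := by
    ext (s | t) x
    exacts [hRl s x, hRr t x]
  rw [expectation_sumElim, expectation_const_mul_left, expectation_const_mul_left]

theorem sqrt_div_mul_div_sqrt {x : ℝ} (hx : 0 < x) (y a : ℝ) :
    √(x / y) * a / √x = a / √y := by
  have hsqrt : √x ≠ 0 := (Real.sqrt_pos.mpr hx).ne'
  rw [Real.sqrt_div hx.le, div_mul_eq_mul_div, div_right_comm, mul_div_cancel_left₀ _ hsqrt]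

theorem mixed_normalized_expectation {P : S → X3 → ℝ} {Q : T → X3 → ℝ} {R : S ⊕ T → X3 → ℝ}
    {a b D D' : ℝ} (hD : 0 < D)
    (hRl : ∀ s x, R (Sum.inl s) x = a * P s x) (hRr : ∀ t x, R (Sum.inr t) x = b * Q t x)
    {σ : S ⊕ T → ℝ} {ρ : S → ℝ} {ρ' : T → ℝ} (hσl : ∀ s, σ (Sum.inl s) = ρ s)
    (hσr : ∀ t, σ (Sum.inr t) = √(D / D') * ρ' t) (f : X3 → ℝ) :
    a * expectation P (fun s x => ρ s * f x) / √D
        + b * expectation Q (fun t x => ρ' t * f x) / √D'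
      = expectation R (fun s x => σ s * f x) / √D := by
  simp only [expectation_mixture hRl hRr, hσl, hσr, mul_assoc, expectation_const_mul]
  rw [add_div, mul_left_comm b, sqrt_div_mul_div_sqrt hD]

theorem mixing_identity_general (G : X3 → ℝ → ℝ → ℝ)
    (hG : ∀ x c w1 w2, 0 ≤ c → G x (c * w1) (c * w2) = c ^ 2 * G x w1 w2)
    (f : X3 → ℝ) (lam : ℝ) (P : S → X3 → ℝ) (Q : T → X3 → ℝ)
    (ρ1 ρ2 : S → ℝ) (ρ1' ρ2' : T → ℝ) (DP DQ : ℝ)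
    (hDPdef : DP = expectation P fun s x => G x (ρ1 s) (ρ2 s))
    (hDQdef : DQ = expectation Q fun t x => G x (ρ1' t) (ρ2' t))
    (hDP : 0 < DP) (hDQ : 0 < DQ) (ν : ℝ) (hν : ν = √(DP / DQ))
    (R : S ⊕ T → X3 → ℝ)
    (hRl : ∀ s x, R (Sum.inl s) x = lam * P s x)
    (hRr : ∀ t x, R (Sum.inr t) x = (1 - lam) * Q t x)
    (σ1 σ2 : S ⊕ T → ℝ)
    (hσ1l : ∀ s, σ1 (Sum.inl s) = ρ1 s) (hσ1r : ∀ t, σ1 (Sum.inr t) = ν * ρ1' t)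
    (hσ2l : ∀ s, σ2 (Sum.inl s) = ρ2 s) (hσ2r : ∀ t, σ2 (Sum.inr t) = ν * ρ2' t) :
    (expectation R fun s x => G x (σ1 s) (σ2 s)) = DP ∧
    (lam * expectation P (fun s x => ρ1 s * f x) / √DP
        + (1 - lam) * expectation Q (fun t x => ρ1' t * f x) / √DQ
      = expectation R (fun s x => σ1 s * f x) /
          √(expectation R fun s x => G x (σ1 s) (σ2 s))) ∧
    (lam * expectation P (fun s x => ρ2 s * f x) / √DP
        + (1 - lam) * expectation Q (fun t x => ρ2' t * f x) / √DQ
      = expectation R (fun s x => σ2 s * f x) /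
          √(expectation R fun s x => G x (σ1 s) (σ2 s))) := by
  subst hν
  have hscale : √(DP / DQ) ^ 2 * DQ = DP := by
    rw [Real.sq_sqrt (div_pos hDP hDQ).le, div_mul_cancel₀ _ hDQ.ne']
  have hdenom : (expectation R fun s x => G x (σ1 s) (σ2 s)) = DP :=
    calc (expectation R fun s x => G x (σ1 s) (σ2 s))
        = lam * DP + (1 - lam) * (√(DP / DQ) ^ 2 * DQ) := by
          simp only [expectation_mixture hRl hRr, hσ1l, hσ1r, hσ2l, hσ2r,
            hG _ _ _ _ (Real.sqrt_nonneg _), expectation_const_mul, ← hDPdef, ← hDQdef]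
      _ = DP := by rw [hscale]; ring
  rw [hdenom]
  exact ⟨rfl, mixed_normalized_expectation hDP hRl hRr hσ1l hσ1r f,
    mixed_normalized_expectation hDP hRl hRr hσ2l hσ2r f⟩

end Mixture

/-- **The mixing identity behind convexity of the rate-key region**: merging
`P` (weight `λ`) with `Q` (weight `1 − λ`) into the pmf `R` on the twelve-point
index set `Fin 6 ⊕ Fin 6`, and rescaling the second family of `ρ`-weights by
`ν = √(D_P / D_Q)`, the merged denominator equals `D_P` and each normalized
mixed expectation combines additively. -/
theorem mixing_identity (X3 Z : Type) [Fintype X3] [Fintype Z]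
    (Γ : Bool → Bool → X3 → Z → ℝ)
    (hnn : ∀ x1 x2 x3 z, 0 ≤ Γ x1 x2 x3 z)
    (hsum : ∀ x1 x2 x3, ∑ z, Γ x1 x2 x3 z = 1)
    (hac1 : ∀ x3 z, Γ false false x3 z = 0 → Γ true false x3 z = 0)
    (hac2 : ∀ x3 z, Γ false false x3 z = 0 → Γ false true x3 z = 0)
    (f : X3 → ℝ) (lam : ℝ) (hlam0 : 0 ≤ lam) (hlam1 : lam ≤ 1)
    (P Q : Fin 6 → X3 → ℝ)
    (hPnn : ∀ t x3, 0 ≤ P t x3) (hP : ∑ t, ∑ x3, P t x3 = 1)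
    (hQnn : ∀ t x3, 0 ≤ Q t x3) (hQ : ∑ t, ∑ x3, Q t x3 = 1)
    (ρ1 ρ2 ρ1' ρ2' : Fin 6 → ℝ)
    (hρ1 : ∀ t, 0 ≤ ρ1 t) (hρ2 : ∀ t, 0 ≤ ρ2 t)
    (hρ1' : ∀ t, 0 ≤ ρ1' t) (hρ2' : ∀ t, 0 ≤ ρ2' t)
    (DP DQ : ℝ)
    (hDPdef : DP = ∑ t, ∑ x3, P t x3 * F Γ x3 (ρ1 t) (ρ2 t))
    (hDQdef : DQ = ∑ t, ∑ x3, Q t x3 * F Γ x3 (ρ1' t) (ρ2' t))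
    (hDP : 0 < DP) (hDQ : 0 < DQ)
    (ν : ℝ) (hν : ν = Real.sqrt (DP / DQ))
    (R : Fin 6 ⊕ Fin 6 → X3 → ℝ)
    (hRl : ∀ (t : Fin 6) (x3 : X3), R (Sum.inl t) x3 = lam * P t x3)
    (hRr : ∀ (t : Fin 6) (x3 : X3), R (Sum.inr t) x3 = (1 - lam) * Q t x3)
    (σ1 σ2 : Fin 6 ⊕ Fin 6 → ℝ)
    (hσ1l : ∀ t : Fin 6, σ1 (Sum.inl t) = ρ1 t)
    (hσ1r : ∀ t : Fin 6, σ1 (Sum.inr t) = ν * ρ1' t)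
    (hσ2l : ∀ t : Fin 6, σ2 (Sum.inl t) = ρ2 t)
    (hσ2r : ∀ t : Fin 6, σ2 (Sum.inr t) = ν * ρ2' t) :
    (∑ s, ∑ x3, R s x3 * F Γ x3 (σ1 s) (σ2 s)) = DP ∧
    (lam * (∑ t, ∑ x3, P t x3 * (ρ1 t * f x3)) / Real.sqrt DP
        + (1 - lam) * (∑ t, ∑ x3, Q t x3 * (ρ1' t * f x3)) / Real.sqrt DQ
      = (∑ s, ∑ x3, R s x3 * (σ1 s * f x3)) /
          Real.sqrt (∑ s, ∑ x3, R s x3 * F Γ x3 (σ1 s) (σ2 s))) ∧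
    (lam * (∑ t, ∑ x3, P t x3 * (ρ2 t * f x3)) / Real.sqrt DP
        + (1 - lam) * (∑ t, ∑ x3, Q t x3 * (ρ2' t * f x3)) / Real.sqrt DQ
      = (∑ s, ∑ x3, R s x3 * (σ2 s * f x3)) /
          Real.sqrt (∑ s, ∑ x3, R s x3 * F Γ x3 (σ1 s) (σ2 s))) :=
  mixing_identity_general (F Γ) (fun x c w1 w2 _ => F_mul_mul Γ x c w1 w2) f lam P Q ρ1 ρ2 ρ1' ρ2'
    DP DQ hDPdef hDQdef hDP hDQ ν hν R hRl hRr σ1 σ2 hσ1l hσ1r hσ2l hσ2r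

end CovertMixing
end
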